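/- Let H be a Hopf monoid in a braided monoidal category C (not assumed symmetric), and let (δ, σ) be a braided modular pair in involution for H. Then τ₂ ∘ Δ = ((η ⊗ 1_H) ∘ λ_H⁻¹) ∘ τ₁ as morphisms H → H ⊗ H, where τ₁ := m ∘ (S̃ ⊗ σ) ∘ ρ_H⁻¹ : H → H (i.e. the para-cocyclic relation τ₂ ∘ δ₁ = δ₀ ∘ τ₁ with coface maps δ₁ := Δ and δ₀ := (η ⊗ 1_H) ∘ λ_H⁻¹). -/

import Mathlib

/-!
The right hit action `L h = δ(h₁) h₂` is right colinear, `Δ ∘ L = (L ⊗ 1) ∘ Δ`, and `S̃ = S ∘ L`.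
Hence the `L` hidden in `τ₂ ∘ Δ` can be applied before `Δ`, which reduces the relation to the one
for the untwisted antipode. There, up to braidings, anticomultiplicativity of `S` gives
`S(h₁)₁ h₂ ⊗ S(h₁)₂ = S(h₂) h₃ ⊗ S(h₁) = 1 ⊗ S(h)`; the hexagon is what allows `S(h₂)` and `h₃`
to be multiplied before they are braided past `S(h₁)`.
-/

open CategoryTheory MonoidalCategory

universe v u

/-- A Hopf algebra object (a "braided Hopf algebra") in a braided monoidal category `C`,
consisting of an object `X` with multiplication `mul`, unit `one`, comultiplication
`comul`, counit `counit` and antipode `antipode`, satisfying the usual axioms, with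
the compatibility of `mul` and `comul` expressed via the braiding. -/
structure HopfObj (C : Type u) [Category.{v} C] [MonoidalCategory C]
    [BraidedCategory C] where
  X : C
  mul : X ⊗ X ⟶ X
  one : 𝟙_ C ⟶ X
  comul : X ⟶ X ⊗ X
  counit : X ⟶ 𝟙_ C
  antipode : X ⟶ X
  mul_assoc : (mul ▷ X) ≫ mul = (α_ X X X).hom ≫ (X ◁ mul) ≫ mul
  one_mul : (one ▷ X) ≫ mul = (λ_ X).hom
  mul_one : (X ◁ one) ≫ mul = (ρ_ X).hom
  comul_assoc : comul ≫ (comul ▷ X) ≫ (α_ X X X).hom = comul ≫ (X ◁ comul)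
  counit_comul : comul ≫ (counit ▷ X) = (λ_ X).inv
  comul_counit : comul ≫ (X ◁ counit) = (ρ_ X).inv
  mul_comul : mul ≫ comul =
      (comul ⊗ₘ comul) ≫ (α_ X X (X ⊗ X)).hom ≫ (X ◁ (α_ X X X).inv) ≫
        (X ◁ ((β_ X X).hom ▷ X)) ≫ (X ◁ (α_ X X X).hom) ≫
        (α_ X X (X ⊗ X)).inv ≫ (mul ⊗ₘ mul)
  one_comul : one ≫ comul = (λ_ (𝟙_ C)).inv ≫ (one ⊗ₘ one)
  mul_counit : mul ≫ counit = (counit ⊗ₘ counit) ≫ (λ_ (𝟙_ C)).hom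
  one_counit : one ≫ counit = 𝟙 (𝟙_ C)
  antipode_left : comul ≫ (antipode ▷ X) ≫ mul = counit ≫ one
  antipode_right : comul ≫ (X ◁ antipode) ≫ mul = counit ≫ one

variable {C : Type u} [Category.{v} C] [MonoidalCategory C] [BraidedCategory C]

/-- The `δ`-twisted antipode `S̃ = λ_H ∘ (δ ⊗ S) ∘ Δ`. -/
def HopfObj.twist (A : _root_.HopfObj C) (δ : A.X ⟶ 𝟙_ C) : A.X ⟶ A.X :=
  A.comul ≫ (δ ⊗ₘ A.antipode) ≫ (λ_ A.X).hom

/-- `δ : H ⟶ 𝟙` is a character, i.e. a morphism of monoid objects. -/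
def HopfObj.IsCharacter (A : _root_.HopfObj C) (δ : A.X ⟶ 𝟙_ C) : Prop :=
  A.mul ≫ δ = (δ ⊗ₘ δ) ≫ (λ_ (𝟙_ C)).hom ∧ A.one ≫ δ = 𝟙 (𝟙_ C)

/-- `σ : 𝟙 ⟶ H` is a cocharacter, i.e. a morphism of comonoid objects. -/
def HopfObj.IsCocharacter (A : _root_.HopfObj C) (σ : 𝟙_ C ⟶ A.X) : Prop :=
  σ ≫ A.comul = (λ_ (𝟙_ C)).inv ≫ (σ ⊗ₘ σ) ∧ σ ≫ A.counit = 𝟙 (𝟙_ C)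

/-- The morphism `m ∘ (m ⊗ 1_H) ∘ ((S ∘ σ) ⊗ (S̃ ∘ S̃) ⊗ σ) : H ⟶ H`
(with unitors inserted). -/
def HopfObj.bmpiMap (A : _root_.HopfObj C) (δ : A.X ⟶ 𝟙_ C) (σ : 𝟙_ C ⟶ A.X) :
    A.X ⟶ A.X :=
  (λ_ A.X).inv ≫ ((σ ≫ A.antipode) ⊗ₘ (A.twist δ ≫ A.twist δ)) ≫
    (ρ_ (A.X ⊗ A.X)).inv ≫ ((A.X ⊗ A.X) ◁ σ) ≫ (A.mul ▷ A.X) ≫ A.mul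

/-- `(δ, σ)` is a braided modular pair in involution. -/
def HopfObj.IsBMPI (A : _root_.HopfObj C) (δ : A.X ⟶ 𝟙_ C) (σ : 𝟙_ C ⟶ A.X) : Prop :=
  σ ≫ δ = 𝟙 (𝟙_ C) ∧ A.bmpiMap δ σ = 𝟙 A.X

/-- The cyclic operator `τ₂ = (m ⊗ m) ∘ (1_H ⊗ ψ ⊗ 1_H) ∘ ((Δ ∘ S̃) ⊗ 1_H ⊗ σ)`,
with the `σ`-factor inserted via `H ⊗ H ≅ (H ⊗ H) ⊗ 𝟙`. -/
def HopfObj.tau2 (A : _root_.HopfObj C) (δ : A.X ⟶ 𝟙_ C) (σ : 𝟙_ C ⟶ A.X) :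
    A.X ⊗ A.X ⟶ A.X ⊗ A.X :=
  (ρ_ (A.X ⊗ A.X)).inv ≫ (((A.twist δ ≫ A.comul) ⊗ₘ 𝟙 A.X) ⊗ₘ σ) ≫
    (((α_ A.X A.X A.X).hom ≫ (A.X ◁ (β_ A.X A.X).hom) ≫ (α_ A.X A.X A.X).inv) ▷ A.X) ≫
    (α_ (A.X ⊗ A.X) A.X A.X).hom ≫ (A.mul ⊗ₘ A.mul)

open scoped MonObj ComonObj HopfObj

section Monoidal

variable {D : Type u} [Category.{v} D] [MonoidalCategory D]

/-- The right hit action `h ↼ f = f(h₁) h₂` of a functional `f` on a comonoid object. -/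
def rightHit {M : D} [ComonObj M] (f : M ⟶ 𝟙_ D) : M ⟶ M :=
  Δ ≫ f ▷ M ≫ (λ_ M).hom

theorem rightHit_comul {M : D} [ComonObj M] (f : M ⟶ 𝟙_ D) :
    rightHit f ≫ Δ = Δ ≫ rightHit f ▷ M := by
  calc rightHit f ≫ Δ
      = Δ ≫ M ◁ Δ ≫ f ▷ (M ⊗ M) ≫ (λ_ (M ⊗ M)).hom := by
        simp only [rightHit, Category.assoc, ← leftUnitor_naturality, whisker_exchange_assoc]
    _ = Δ ≫ rightHit f ▷ M := by
        simp [rightHit]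

/-- Right multiplication `m ↦ m · x` by a point `x` of a monoid object. -/
def rightMul {M : D} [MonObj M] (x : 𝟙_ D ⟶ M) : M ⟶ M :=
  (ρ_ M).inv ≫ M ◁ x ≫ μ

theorem whiskerLeft_rightMul (N : D) {M : D} [MonObj M] (x : 𝟙_ D ⟶ M) :
    N ◁ rightMul x = (ρ_ (N ⊗ M)).inv ≫ (N ⊗ M) ◁ x ≫ (α_ N M M).hom ≫ N ◁ μ := by
  simp [rightMul]

theorem rightUnitor_inv_tensorHom {M P Q : D} (f : P ⟶ Q) (x : 𝟙_ D ⟶ M) :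
    (ρ_ P).inv ≫ (f ⊗ₘ x) = f ≫ (ρ_ Q).inv ≫ Q ◁ x := by
  simp [MonoidalCategory.tensorHom_def]

theorem rightUnitor_inv_tensorHom_mul {M P : D} [MonObj M] (f : P ⟶ M) (x : 𝟙_ D ⟶ M) :
    (ρ_ P).inv ≫ (f ⊗ₘ x) ≫ μ = f ≫ rightMul x := by
  rw [reassoc_of% rightUnitor_inv_tensorHom f x, rightMul]

end Monoidal

/-- Right multiplication of a monoid object `M` on the first factor of `M ⊗ N`: the acting copy
of `M` reaches its factor by passing `N` through the braiding `β_ N M`, not its inverse. -/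
def mulFst (M N : C) [MonObj M] : (M ⊗ N) ⊗ M ⟶ M ⊗ N :=
  (α_ M N M).hom ≫ M ◁ (β_ N M).hom ≫ (α_ M M N).inv ≫ μ ▷ N

theorem braiding_mulFst (M N : C) [MonObj M] :
    (β_ N M).hom ▷ M ≫ mulFst M N = (α_ N M M).hom ≫ N ◁ μ ≫ (β_ N M).hom := by
  simp [mulFst, BraidedCategory.braiding_tensor_right_hom]

theorem comul_comul_antipode_mul (H : C) [CategoryTheory.HopfObj H] :
    Δ[H] ≫ Δ[H] ▷ H ≫ (α_ H H H).hom ≫ H ◁ (𝒮[H] ▷ H ≫ μ[H]) =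
      (ρ_ H).inv ≫ H ◁ η[H] := by
  rw [← ComonObj.comul_assoc_assoc, ← whiskerLeft_comp,
    CategoryTheory.HopfObj.antipode_left, whiskerLeft_comp, ComonObj.comul_counit_assoc]

theorem antipode_comul_mulFst (H : C) [CategoryTheory.HopfObj H] :
    Δ[H] ≫ (𝒮[H] ≫ Δ[H]) ▷ H ≫ mulFst H H = 𝒮[H] ≫ (λ_ H).inv ≫ η[H] ▷ H := by
  calc Δ[H] ≫ (𝒮[H] ≫ Δ[H]) ▷ H ≫ mulFst H H
      = Δ[H] ≫ Δ[H] ▷ H ≫ (𝒮[H] ⊗ₘ 𝒮[H]) ▷ H ≫ (β_ H H).hom ▷ H ≫ mulFst H H := by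
        rw [CategoryTheory.HopfObj.antipode_comul, ← BraidedCategory.braiding_naturality]
        simp only [comp_whiskerRight, Category.assoc]
    _ = (Δ[H] ≫ Δ[H] ▷ H ≫ (α_ H H H).hom ≫ H ◁ (𝒮[H] ▷ H ≫ μ[H])) ≫
          𝒮[H] ▷ H ≫ (β_ H H).hom := by
        simp only [braiding_mulFst, MonoidalCategory.tensorHom_def, comp_whiskerRight,
          whiskerLeft_comp, Category.assoc, associator_naturality_left_assoc,
          associator_naturality_middle_assoc, whisker_exchange_assoc]
    _ = (ρ_ H).inv ≫ H ◁ η[H] ≫ 𝒮[H] ▷ H ≫ (β_ H H).hom := by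
        rw [comul_comul_antipode_mul, Category.assoc]
    _ = 𝒮[H] ≫ (λ_ H).inv ≫ η[H] ▷ H := by
        rw [whisker_exchange_assoc, BraidedCategory.braiding_naturality_right]
        simp

namespace HopfObj

/-- The operations agree definitionally with those of `A`, so `rfl` converts between, e.g.,
`A.comul` and `Δ[A.X]`. -/
instance (A : _root_.HopfObj C) : CategoryTheory.HopfObj A.X where
  one := A.one
  mul := A.mul
  one_mul := A.one_mul
  mul_one := A.mul_one
  mul_assoc := A.mul_assoc
  counit := A.counit
  comul := A.comul
  counit_comul := A.counit_comul
  comul_counit := A.comul_counit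
  comul_assoc := A.comul_assoc.symm
  mul_comul := by simpa [tensorμ] using A.mul_comul
  one_comul := A.one_comul
  mul_counit := A.mul_counit
  one_counit := A.one_counit
  antipode := A.antipode
  antipode_left := A.antipode_left
  antipode_right := A.antipode_right

variable (A : _root_.HopfObj C) (δ : A.X ⟶ 𝟙_ C) (σ : 𝟙_ C ⟶ A.X)

theorem twist_eq_rightHit_antipode : A.twist δ = rightHit δ ≫ 𝒮[A.X] := by
  change Δ[A.X] ≫ (δ ⊗ₘ 𝒮[A.X]) ≫ (λ_ A.X).hom = _
  simp [rightHit, MonoidalCategory.tensorHom_def]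

theorem tau2_eq_mulFst_rightMul :
    A.tau2 δ σ = (A.twist δ ≫ Δ[A.X]) ▷ A.X ≫ mulFst A.X A.X ≫ A.X ◁ rightMul σ := by
  let swap := (α_ A.X A.X A.X).hom ≫ (A.X ◁ (β_ A.X A.X).hom) ≫ (α_ A.X A.X A.X).inv
  calc A.tau2 δ σ
      = (ρ_ (A.X ⊗ A.X)).inv ≫ ((A.twist δ ≫ Δ[A.X]) ▷ A.X ≫ swap ⊗ₘ σ) ≫
          (α_ (A.X ⊗ A.X) A.X A.X).hom ≫ (μ[A.X] ⊗ₘ μ[A.X]) := by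
        rw [← tensorHom_id, ← Category.comp_id σ, ← tensorHom_comp_tensorHom, tensorHom_id swap,
          Category.comp_id, Category.assoc]
        rfl
    _ = ((A.twist δ ≫ Δ[A.X]) ▷ A.X ≫ swap) ≫ (A.X ⊗ A.X) ◁ rightMul σ ≫ μ[A.X] ▷ A.X := by
        rw [reassoc_of% rightUnitor_inv_tensorHom _ σ, tensorHom_def' μ[A.X] μ[A.X],
          whiskerLeft_rightMul]
        simp only [Category.assoc]
    _ = (A.twist δ ≫ Δ[A.X]) ▷ A.X ≫ mulFst A.X A.X ≫ A.X ◁ rightMul σ := by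
        rw [whisker_exchange]
        simp only [swap, mulFst, Category.assoc]

theorem tau2_comul_general :
    A.comul ≫ A.tau2 δ σ =
      ((ρ_ A.X).inv ≫ (A.twist δ ⊗ₘ σ) ≫ A.mul) ≫ (λ_ A.X).inv ≫ (A.one ▷ A.X) := by
  calc A.comul ≫ A.tau2 δ σ
      = (Δ[A.X] ≫ rightHit δ ▷ A.X) ≫ (𝒮[A.X] ≫ Δ[A.X]) ▷ A.X ≫
          mulFst A.X A.X ≫ A.X ◁ rightMul σ := by
        rw [tau2_eq_mulFst_rightMul, twist_eq_rightHit_antipode, Category.assoc,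
          comp_whiskerRight, Category.assoc, Category.assoc]
        rfl
    _ = rightHit δ ≫ (Δ[A.X] ≫ (𝒮[A.X] ≫ Δ[A.X]) ▷ A.X ≫ mulFst A.X A.X) ≫
          A.X ◁ rightMul σ := by
        simp only [← rightHit_comul, Category.assoc]
    _ = rightHit δ ≫ (𝒮[A.X] ≫ (λ_ A.X).inv ≫ η[A.X] ▷ A.X) ≫ A.X ◁ rightMul σ := by
        rw [antipode_comul_mulFst]
    _ = (A.twist δ ≫ rightMul σ) ≫ (λ_ A.X).inv ≫ η[A.X] ▷ A.X := by
        simp only [twist_eq_rightHit_antipode, Category.assoc, ← whisker_exchange,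
          ← leftUnitor_inv_naturality_assoc]
    _ = ((ρ_ A.X).inv ≫ (A.twist δ ⊗ₘ σ) ≫ A.mul) ≫ (λ_ A.X).inv ≫ (A.one ▷ A.X) := by
        rw [← rightUnitor_inv_tensorHom_mul]
        rfl

end HopfObj

/-- `τ₂ ∘ Δ = ((η ⊗ 1_H) ∘ λ_H⁻¹) ∘ τ₁` where
`τ₁ = m ∘ (S̃ ⊗ σ) ∘ ρ_H⁻¹`. -/
theorem HopfObj.tau2_comul (A : _root_.HopfObj C) (δ : A.X ⟶ 𝟙_ C) (σ : 𝟙_ C ⟶ A.X)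
    (hδ : A.IsCharacter δ) (hσ : A.IsCocharacter σ) (hbmpi : A.IsBMPI δ σ) :
    A.comul ≫ A.tau2 δ σ =
      ((ρ_ A.X).inv ≫ (A.twist δ ⊗ₘ σ) ≫ A.mul) ≫ (λ_ A.X).inv ≫ (A.one ▷ A.X) :=
  A.tau2_comul_general δ σ
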